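/- arXiv:0906.5491 — 2 statements merged into one kernel-verified Lean document; each statement's English description precedes it below -/
import Mathlib

section
/- Let G = ⟨x, y | x y² x⁻¹ = y³⟩, z = y⁴, and M = M(G,{x,z}) the associated relation module. Then M is stably free non-free of rank one: there is a ℤG-module isomorphism M ⊕ ℤG ≅ ℤG ⊕ ℤG, but M is not isomorphic to ℤG (indeed M is not a cyclic ℤG-module). -/
/-- The single relator `x y² x⁻¹ y⁻³` in the free group on two generators. -/
def bsRels : Set (FreeGroup (Fin 2)) :=
  {FreeGroup.of 0 * FreeGroup.of 1 ^ 2 * (FreeGroup.of 0)⁻¹ * (FreeGroup.of 1 ^ 3)⁻¹}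

/-- The Baumslag–Solitar group `G = ⟨x, y | x y² x⁻¹ = y³⟩`. -/
abbrev BSGroup := PresentedGroup bsRels

/-- `x ∈ G`. -/
def bsX : BSGroup := PresentedGroup.of 0

/-- `y ∈ G`. -/
def bsY : BSGroup := PresentedGroup.of 1

/-- The epimorphism `F(a,b) → G`, `a ↦ x`, `b ↦ z = y⁴`. -/
def bsPi : FreeGroup (Fin 2) →* BSGroup :=
  FreeGroup.lift (fun i => if i = 0 then bsX else bsY ^ 4)

/-!
Write `y` as the word `x² z x⁻² z⁻²`. The relators `r : x y² = y³ x` and `s : z = y⁴` generate the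
relation module `M`, and conjugates of them satisfy an identity in the free group, which gives
`a r + b s = 0` in `M`. The row `(a, b)` is unimodular, `a c + b d = 1`, and Fox calculus shows that
`u r + v s = 0` and `u c + v d = 0` force `u = v = 0`. Hence `(u, v) ↦ (u r + v s, u c + v d)` is an
isomorphism `ℤG² ≅ M ⊕ ℤG`.

Suppose that `m` generates `M`. Let `t` act on `ℤ[ℚ]`, polynomials in rational powers of `y`, by
`y ↦ y ^ (3 / 2)`, and map `ℤG` to the skew Laurent polynomials `ℤ[ℚ][t, t⁻¹]` by `x ↦ t`. The image
of `∂m/∂z` divides that of the Fox derivative of `x z² = z³ x`, whose support lies in `{1, t}`, so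
up to a power of `t` it is `α + β t`. The fundamental formula
`∂m/∂x (x - 1) + ∂m/∂z (z - 1) = 0` then forces `1 + y² + y⁴ ∣ α`. On the other hand `α` divides the
lowest coefficient `1 + y + ⋯ + y⁸` of the image of `∂s/∂z`. This fails at a primitive sixth root of
unity, where `1 + y² + y⁴` vanishes and `1 + y + ⋯ + y⁸` does not.
-/

section CrossedHom

variable {F A N : Type*} [Group F] [Semiring A] [AddCommGroup N] [Module A N]

/-- Crossed homomorphisms `F → N` (also called Fox derivations), where `F` acts on the `A`-module
`N` through `ρ : F →* A`. -/
def IsCrossedHom (ρ : F →* A) (D : F → N) : Prop :=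
  ∀ f g, D (f * g) = D f + ρ f • D g

namespace IsCrossedHom

variable {ρ : F →* A} {D : F → N} (hD : IsCrossedHom ρ D)
include hD

theorem map_one : D 1 = 0 := by
  simpa using hD 1 1

theorem map_div_of_eq {f g : F} (h : ρ f = ρ g) : D (f / g) = D f - D g := by
  have hfg : ρ (f / g) = 1 := by
    rw [div_eq_mul_inv, map_mul, h, ← map_mul, mul_inv_cancel, _root_.map_one]
  rw [eq_sub_iff_add_eq, ← one_smul A (D g), ← hfg, ← hD, div_mul_cancel]

theorem map_conj (f : F) {r : F} (hr : ρ r = 1) : D (f * r * f⁻¹) = ρ f • D r := by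
  rw [← div_eq_mul_inv, hD.map_div_of_eq (by rw [map_mul, hr, mul_one]), hD, add_sub_cancel_left]

theorem map_pow (f : F) (n : ℕ) : D (f ^ n) = (∑ i ∈ Finset.range n, ρ f ^ i) • D f := by
  induction n with
  | zero => simp [hD.map_one]
  | succ n ih => rw [pow_succ, hD, ih, _root_.map_pow, Finset.sum_range_succ, add_smul]

end IsCrossedHom

section FreeGroup

variable {α : Type*}

theorem IsCrossedHom.eq_of_eq_on_of {ρ : FreeGroup α →* A} {D D' : FreeGroup α → N}
    (hD : IsCrossedHom ρ D) (hD' : IsCrossedHom ρ D')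
    (h : ∀ i, D (FreeGroup.of i) = D' (FreeGroup.of i)) (f : FreeGroup α) : D f = D' f := by
  induction f using FreeGroup.induction_on with
  | C1 => rw [hD.map_one, hD'.map_one]
  | of i => exact h i
  | inv_of i _ =>
    have map_inv {D : FreeGroup α → N} (hD : IsCrossedHom ρ D) (f : FreeGroup α) :
        D f⁻¹ = -(ρ f⁻¹ • D f) := by
      rw [eq_neg_iff_add_eq_zero, ← hD, inv_mul_cancel, hD.map_one]
    rw [map_inv hD, map_inv hD', h]
  | mul f g hf hg => rw [hD, hD', hf, hg]

/-- The crossed homomorphism on a free group with prescribed values `p` on the generators, read off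
from the homomorphism to the semidirect product `N ⋊ Aˣ` that sends the `i`-th generator to
`(p i, ρ i)`. For `p = Pi.single i 1` it is the Fox derivative with respect to the `i`-th
generator. -/
def foxDerivation (ρ : FreeGroup α →* A) (p : α → N) (f : FreeGroup α) : N :=
  (FreeGroup.lift (fun i ↦ (⟨Multiplicative.ofAdd (p i), ρ.toHomUnits (FreeGroup.of i)⟩ :
    Multiplicative N ⋊[(MulAutMultiplicative N).symm.toMonoidHom.comp
      (DistribMulAction.toAddAut Aˣ N)] Aˣ)) f).left.toAdd

theorem isCrossedHom_foxDerivation (ρ : FreeGroup α →* A) (p : α → N) :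
    IsCrossedHom ρ (foxDerivation ρ p) := by
  intro f g
  let φ : Aˣ →* MulAut (Multiplicative N) :=
    (MulAutMultiplicative N).symm.toMonoidHom.comp (DistribMulAction.toAddAut Aˣ N)
  let Φ : FreeGroup α →* Multiplicative N ⋊[φ] Aˣ :=
    FreeGroup.lift fun i ↦ ⟨Multiplicative.ofAdd (p i), ρ.toHomUnits (FreeGroup.of i)⟩
  have right_eq : (Φ f).right = ρ.toHomUnits f :=
    DFunLike.congr_fun (FreeGroup.ext_hom (f := SemidirectProduct.rightHom.comp Φ)
      (g := ρ.toHomUnits) fun i ↦ by simp [Φ]) f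
  change (Φ (f * g)).left.toAdd = (Φ f).left.toAdd + (ρ.toHomUnits f : A) • (Φ g).left.toAdd
  rw [map_mul, SemidirectProduct.mul_left, right_eq]
  rfl

@[simp]
theorem foxDerivation_of (ρ : FreeGroup α →* A) (p : α → N) (i : α) :
    foxDerivation ρ p (FreeGroup.of i) = p i := by
  rw [foxDerivation, FreeGroup.lift_apply_of, toAdd_ofAdd]

theorem sum_foxDerivation_mul_of_sub_one {A : Type*} [Ring A] [Fintype α] [DecidableEq α]
    (ρ : FreeGroup α →* A) (f : FreeGroup α) :
    ∑ i, foxDerivation ρ (Pi.single i (1 : A)) f * (ρ (FreeGroup.of i) - 1) = ρ f - 1 := by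
  refine IsCrossedHom.eq_of_eq_on_of (ρ := ρ) (N := A) (D' := fun f ↦ ρ f - 1)
    (D := fun f ↦ ∑ i, foxDerivation ρ (Pi.single i (1 : A)) f * (ρ (FreeGroup.of i) - 1))
    (fun f g ↦ ?_) (fun f g ↦ ?_) (fun j ↦ ?_) f
  · simp only [isCrossedHom_foxDerivation ρ _ f g, smul_eq_mul, add_mul, mul_assoc,
      Finset.sum_add_distrib, Finset.mul_sum]
  · simp only [map_mul, smul_eq_mul]
    noncomm_ring
  · simp [Pi.single_apply]

end FreeGroup

end CrossedHom

section RelationModule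

variable {F G : Type*} [Group F] [Group G] (π : F →* G)

/-- The underlying group of the relation module of an epimorphism `π`, written additively. -/
abbrev RelationModule : Type _ := Additive (Abelianization π.ker)

namespace RelationModule

variable {π}

/-- The class of a relation in the relation module. -/
def mk (r : π.ker) : RelationModule π := Additive.ofMul (Abelianization.of r)

theorem mk_mul (r s : π.ker) : mk (r * s) = mk r + mk s := rfl

theorem mk_surjective : Function.Surjective (mk : π.ker → RelationModule π) :=
  QuotientGroup.mk_surjective

variable (π) in
/-- A `ℤG`-module structure on the relation module is the intended one if each `π f` acts as
conjugation by `f`; for surjective `π` this determines the structure. -/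
def ActsByConjugation [Module (MonoidAlgebra ℤ G) (RelationModule π)] : Prop :=
  ∀ (f : F) (r : π.ker), MonoidAlgebra.of ℤ G (π f) • mk r = mk (MulAut.conjNormal f r)

variable [Module (MonoidAlgebra ℤ G) (RelationModule π)]

theorem span_image_mk_eq_top (hact : ActsByConjugation π) {S : Set π.ker}
    (hS : Subgroup.normalClosure (Subtype.val '' S) = π.ker) :
    Submodule.span (MonoidAlgebra ℤ G) (mk '' S) = ⊤ := by
  set P := Submodule.span (MonoidAlgebra ℤ G) (mk '' S)
  let K : Subgroup π.ker :=
    { carrier := {r | mk r ∈ P}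
      one_mem' := P.zero_mem
      mul_mem' := P.add_mem
      inv_mem' := P.neg_mem }
  have : (K.map π.ker.subtype).Normal := by
    refine ⟨?_⟩
    rintro _ ⟨r, hr, rfl⟩ f
    refine ⟨MulAut.conjNormal f r, ?_, rfl⟩
    change mk _ ∈ P
    rw [← hact]
    exact P.smul_mem _ hr
  have ker_le : π.ker ≤ K.map π.ker.subtype := by
    refine hS.ge.trans (Subgroup.normalClosure_le_normal ?_)
    exact Set.image_mono fun r hr ↦ Submodule.subset_span ⟨r, hr, rfl⟩
  refine eq_top_iff.2 fun m _ ↦ ?_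
  obtain ⟨r, rfl⟩ := mk_surjective m
  obtain ⟨r', hr', h⟩ := ker_le r.2
  rwa [← Subtype.ext h]

variable {N : Type*} [AddCommGroup N] [Module (MonoidAlgebra ℤ G) N] {D : F → N}

/-- The `ℤG`-linear map on the relation module induced by a crossed homomorphism, which is additive
on relations. -/
noncomputable def ofCrossedHom (hπ : Function.Surjective π) (hact : ActsByConjugation π)
    (hD : IsCrossedHom ((MonoidAlgebra.of ℤ G).comp π) D) :
    RelationModule π →ₗ[MonoidAlgebra ℤ G] N :=
  have map_mul (r s : π.ker) : D (r * s) = D r + D s := by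
    rw [hD, MonoidHom.comp_apply, MonoidHom.mem_ker.1 r.2, map_one, one_smul]
  let E : RelationModule π →+ N := MonoidHom.toAdditiveLeft <| Abelianization.lift <|
    MonoidHom.mk' (fun r : π.ker ↦ Multiplicative.ofAdd (D r)) map_mul
  MonoidAlgebra.equivariantOfLinearOfComm E.toIntLinearMap fun g m ↦ by
    obtain ⟨f, rfl⟩ := hπ g
    obtain ⟨r, rfl⟩ := mk_surjective m
    have hr : MonoidAlgebra.of ℤ G (π r) = 1 := by rw [MonoidHom.mem_ker.1 r.2, map_one]
    change E (MonoidAlgebra.of ℤ G (π f) • mk r) = MonoidAlgebra.of ℤ G (π f) • D r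
    rw [hact]
    exact hD.map_conj f hr

@[simp]
theorem ofCrossedHom_mk (hπ : Function.Surjective π) (hact : ActsByConjugation π)
    (hD : IsCrossedHom ((MonoidAlgebra.of ℤ G).comp π) D) (r : π.ker) :
    ofCrossedHom hπ hact hD (mk r) = D r := rfl

section FreeGroup

variable {α : Type*} [DecidableEq α] {π : FreeGroup α →* G}
  [Module (MonoidAlgebra ℤ G) (RelationModule π)] (hπ : Function.Surjective π)
  (hact : ActsByConjugation π)

/-- The Fox derivative with respect to the `i`-th generator, as a linear form on the relation
module. -/
noncomputable def foxDerivative (i : α) :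
    RelationModule π →ₗ[MonoidAlgebra ℤ G] MonoidAlgebra ℤ G :=
  ofCrossedHom hπ hact (isCrossedHom_foxDerivation _ (Pi.single i 1))

theorem foxDerivative_mk (i : α) (r : π.ker) : foxDerivative hπ hact i (mk r) =
    foxDerivation ((MonoidAlgebra.of ℤ G).comp π) (Pi.single i 1) r := rfl

theorem sum_foxDerivative_mul_of_sub_one [Fintype α] (m : RelationModule π) :
    ∑ i, foxDerivative hπ hact i m * (MonoidAlgebra.of ℤ G (π (FreeGroup.of i)) - 1) = 0 := by
  obtain ⟨r, rfl⟩ := mk_surjective m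
  have h := sum_foxDerivation_mul_of_sub_one ((MonoidAlgebra.of ℤ G).comp π) r
  rwa [MonoidHom.comp_apply, MonoidHom.mem_ker.1 r.2, map_one, sub_self] at h

end FreeGroup

end RelationModule

end RelationModule

theorem nonempty_prod_linearEquiv_of_span_pair {A M : Type*} [Ring A] [AddCommGroup M] [Module A M]
    {r s : M} (hspan : Submodule.span A {r, s} = ⊤) {a b c d : A} (hrel : a • r + b • s = 0)
    (hone : a * c + b * d = 1)
    (hker : ∀ u v : A, u • r + v • s = 0 → u * c + v * d = 0 → u = 0 ∧ v = 0) :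
    Nonempty ((M × A) ≃ₗ[A] A × A) := by
  let f := (LinearMap.toSpanSingleton A M r).coprod (LinearMap.toSpanSingleton A M s)
  let g := (LinearMap.toSpanSingleton A A c).coprod (LinearMap.toSpanSingleton A A d)
  have hbij : Function.Bijective (f.prod g) := by
    refine ⟨(injective_iff_map_eq_zero _).2 fun ⟨u, v⟩ huv ↦ ?_, fun ⟨m, e⟩ ↦ ?_⟩
    · exact Prod.ext_iff.2 (hker u v (congrArg Prod.fst huv) (congrArg Prod.snd huv))
    · obtain ⟨k, hfk, hgk⟩ : ∃ k, f k = 0 ∧ g k = 1 := ⟨(a, b), hrel, hone⟩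
      obtain ⟨p, rfl⟩ : ∃ p, f p = m := by
        obtain ⟨u, v, huv⟩ := Submodule.mem_span_pair.1 (hspan.ge (Submodule.mem_top (x := m)))
        exact ⟨(u, v), huv⟩
      exact ⟨p + (e - g p) • k, by simp [hfk, hgk]⟩
  exact ⟨(LinearEquiv.ofBijective _ hbij).symm⟩

theorem isRightRegular_one_sub_of {k G : Type*} [Ring k] [Group G] {g : G}
    (hg : ¬ IsOfFinOrder g) : IsRightRegular (1 - MonoidAlgebra.of k G g) := by
  refine (injective_iff_map_eq_zero (AddMonoidHom.mulRight (1 - MonoidAlgebra.of k G g))).2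
    fun u hu ↦ ?_
  have coeff_mul (h : G) : u.coeff (h * g) = u.coeff h := by
    rw [AddMonoidHom.mulRight_apply, mul_sub, mul_one, sub_eq_zero] at hu
    conv_lhs => rw [hu]
    simp [MonoidAlgebra.of_apply]
  have coeff_mul_pow (h : G) (n : ℕ) : u.coeff (h * g ^ n) = u.coeff h := by
    induction n with
    | zero => simp
    | succ n ih => rw [pow_succ, ← mul_assoc, coeff_mul, ih]
  by_contra hu0
  obtain ⟨h, hh⟩ := Finsupp.ne_iff.1 (mt MonoidAlgebra.coeff_eq_zero.1 hu0)
  have inj : Function.Injective fun n : ℕ ↦ h * g ^ n :=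
    (mul_right_injective h).comp (injective_pow_iff_not_isOfFinOrder.2 hg)
  refine Set.infinite_range_of_injective inj (u.coeff.support.finite_toSet.subset ?_)
  rintro _ ⟨n, rfl⟩
  simpa [coeff_mul_pow] using hh

theorem not_one_add_sq_add_pow_four_dvd_sum_range_nine {R K : Type*} [CommRing R] [Field K]
    [CharZero K] (φ : R →+* K) {y : R} (hφ : IsPrimitiveRoot (φ y) 6) :
    ¬ 1 + y ^ 2 + y ^ 4 ∣ ∑ i ∈ Finset.range 9, y ^ i := by
  have hcyc : φ y ^ 2 - φ y + 1 = 0 := by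
    simpa using hφ.isRoot_cyclotomic (by norm_num)
  intro hdvd
  have hzero : φ (1 + y ^ 2 + y ^ 4) = 0 := by
    simp only [map_add, map_one, map_pow]
    linear_combination (1 + φ y + φ y ^ 2) * hcyc
  have hdvd := map_dvd φ hdvd
  rw [hzero, zero_dvd_iff] at hdvd
  have h2 : 2 * φ y = 0 := by
    simp only [Finset.sum_range_succ, Finset.sum_range_zero, map_add, map_pow, map_zero] at hdvd
    linear_combination hdvd - ((1 + φ y + φ y ^ 2) * (1 + φ y) * φ y ^ 3 + 1) * hcyc
  exact hφ.ne_zero (by norm_num) ((mul_eq_zero.1 h2).resolve_left two_ne_zero)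

section SkewMonoidAlgebra

open SkewMonoidAlgebra

theorem skewMonoidAlgebra_coeff_mul_of_uniqueMul {R Γ : Type*} [Semiring R] [Group Γ]
    [MulSemiringAction Γ R] {f g : SkewMonoidAlgebra R Γ} {a b : Γ}
    (h : UniqueMul f.support g.support a b) :
    (f * g).coeff (a * b) = f.coeff a * a • g.coeff b := by
  rw [coeff_mul_left, sum_def', Finset.sum_eq_single a, inv_mul_cancel_left]
  · intro c hc hca
    by_cases hb : c⁻¹ * (a * b) ∈ g.support
    · exact (hca (h hc hb (mul_inv_cancel_left c _)).1).elim
    · rw [notMem_support_iff.1 hb, smul_zero, mul_zero]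
  · intro ha
    rw [notMem_support_iff.1 ha, zero_mul]

theorem single_eq_singleOneRingHom_mul {R Γ : Type*} [Semiring R] [Monoid Γ]
    [MulSemiringAction Γ R] (a : Γ) (r : R) :
    single a r = singleOneRingHom r * single a 1 := by
  change _ = single 1 r * single a 1
  rw [single_mul_single, one_mul, smul_one, mul_one]

section Ordered

variable {R Γ : Type*} [CommRing R] [CommGroup Γ] [LinearOrder Γ] [IsOrderedMonoid Γ]
  [MulSemiringAction Γ R] {f g : SkewMonoidAlgebra R Γ} {a b : Γ}

theorem skewMonoidAlgebra_coeff_mul_of_isLeast (hf : IsLeast (f.support : Set Γ) a)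
    (hg : IsLeast (g.support : Set Γ) b) : (f * g).coeff (a * b) = f.coeff a * a • g.coeff b :=
  skewMonoidAlgebra_coeff_mul_of_uniqueMul fun _ _ hx hy h ↦
    ((mul_eq_mul_iff_eq_and_eq (hf.2 hx) (hg.2 hy)).1 h.symm).imp Eq.symm Eq.symm

theorem skewMonoidAlgebra_coeff_mul_of_isGreatest (hf : IsGreatest (f.support : Set Γ) a)
    (hg : IsGreatest (g.support : Set Γ) b) : (f * g).coeff (a * b) = f.coeff a * a • g.coeff b :=
  skewMonoidAlgebra_coeff_mul_of_uniqueMul fun _ _ hx hy h ↦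
    (mul_eq_mul_iff_eq_and_eq (hf.2 hx) (hg.2 hy)).1 h

variable [IsDomain R]

theorem isLeast_support_mul (hf : IsLeast (f.support : Set Γ) a)
    (hg : IsLeast (g.support : Set Γ) b) : IsLeast ((f * g).support : Set Γ) (a * b) := by
  refine ⟨mem_support_iff.2 ?_, fun c hc ↦ ?_⟩
  · rw [skewMonoidAlgebra_coeff_mul_of_isLeast hf hg]
    exact mul_ne_zero (mem_support_iff.1 hf.1) ((smul_ne_zero_iff_ne a).2 (mem_support_iff.1 hg.1))
  · obtain ⟨x, hx, y, hy, rfl⟩ := Finset.mem_mul.1 (support_mul f g hc)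
    exact mul_le_mul' (hf.2 hx) (hg.2 hy)

theorem isGreatest_support_mul (hf : IsGreatest (f.support : Set Γ) a)
    (hg : IsGreatest (g.support : Set Γ) b) : IsGreatest ((f * g).support : Set Γ) (a * b) := by
  refine ⟨mem_support_iff.2 ?_, fun c hc ↦ ?_⟩
  · rw [skewMonoidAlgebra_coeff_mul_of_isGreatest hf hg]
    exact mul_ne_zero (mem_support_iff.1 hf.1) ((smul_ne_zero_iff_ne a).2 (mem_support_iff.1 hg.1))
  · obtain ⟨x, hx, y, hy, rfl⟩ := Finset.mem_mul.1 (support_mul f g hc)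
    exact mul_le_mul' (hf.2 hx) (hg.2 hy)

theorem coeff_one_dvd_of_isLeast_support_mul (hg : IsLeast (g.support : Set Γ) 1)
    (hfg : IsLeast ((f * g).support : Set Γ) 1) : g.coeff 1 ∣ (f * g).coeff 1 := by
  have hf : f.support.Nonempty := by
    rw [Finset.nonempty_iff_ne_empty, Ne, support_eq_empty]
    rintro rfl
    simpa using hfg.1
  have hf_least := f.support.isLeast_min' hf
  have hf_one : f.support.min' hf = 1 := by
    simpa using (isLeast_support_mul hf_least hg).unique hfg
  rw [hf_one] at hf_least
  exact ⟨f.coeff 1, by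
    simpa [mul_comm] using skewMonoidAlgebra_coeff_mul_of_isLeast hf_least hg⟩

theorem mul_le_mul_of_support_mul_subset_Icc {c d : Γ} (hf : f ≠ 0)
    (hfg : ((f * g).support : Set Γ) ⊆ Set.Icc c d) (ha : IsLeast (g.support : Set Γ) a)
    (hb : IsGreatest (g.support : Set Γ) b) : c * b ≤ d * a := by
  have hf : f.support.Nonempty := Finset.nonempty_iff_ne_empty.2 (mt support_eq_empty.1 hf)
  have hlow : c ≤ f.support.min' hf * a :=
    (hfg (isLeast_support_mul (f.support.isLeast_min' hf) ha).1).1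
  have hhigh : f.support.max' hf * b ≤ d :=
    (hfg (isGreatest_support_mul (f.support.isGreatest_max' hf) hb).1).2
  calc c * b ≤ f.support.min' hf * a * b := by gcongr
    _ ≤ f.support.max' hf * a * b := by gcongr; exact f.support.min'_le_max' hf
    _ = f.support.max' hf * b * a := mul_right_comm _ _ _
    _ ≤ d * a := by gcongr

end Ordered

theorem support_single_add_single_subset_Icc {R Γ : Type*} [AddCommMonoid R] [Preorder Γ] {i j : Γ}
    (hij : i ≤ j) (a b : R) : ((single i a + single j b).support : Set Γ) ⊆ Set.Icc i j := by
  classical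
  intro k hk
  rcases Finset.mem_union.1 (support_add hk) with hk | hk <;>
    obtain rfl := Finset.mem_singleton.1 (support_single_subset hk)
  exacts [Set.left_mem_Icc.2 hij, Set.right_mem_Icc.2 hij]

theorem isLeast_support_single_add_single {R Γ : Type*} [AddCommMonoid R] [PartialOrder Γ] {i j : Γ}
    (hij : i < j) {a : R} (ha : a ≠ 0) (b : R) :
    IsLeast ((single i a + single j b).support : Set Γ) i :=
  ⟨by simp [hij.ne', ha], fun _ hk ↦ (support_single_add_single_subset_Icc hij.le a b hk).1⟩

theorem exists_eq_single_mul_single_add_single {R : Type*} [CommRing R] [IsDomain R]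
    [MulSemiringAction (Multiplicative ℤ) R] {f g : SkewMonoidAlgebra R (Multiplicative ℤ)}
    (hfg : f * g ≠ 0) {c : Multiplicative ℤ}
    (hsupp : ((f * g).support : Set (Multiplicative ℤ)) ⊆ Set.Icc c (c * .ofAdd 1)) :
    ∃ (n : Multiplicative ℤ) (a b : R), a ≠ 0 ∧
      g = single n 1 * (single 1 a + single (.ofAdd 1) b) := by
  have hg : g.support.Nonempty :=
    Finset.nonempty_iff_ne_empty.2 (mt support_eq_empty.1 (right_ne_zero_of_mul hfg))
  set m := g.support.min' hg
  have hleast := g.support.isLeast_min' hg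
  have hwidth : g.support.max' hg ≤ .ofAdd 1 * m := by
    have := mul_le_mul_of_support_mul_subset_Icc (left_ne_zero_of_mul hfg) hsupp hleast
      (g.support.isGreatest_max' hg)
    rwa [mul_assoc, mul_le_mul_iff_left] at this
  have hsupp_g {i : Multiplicative ℤ} (hi : i ∈ g.support) : i = m ∨ i = m * .ofAdd 1 := by
    have hle : m.toAdd ≤ i.toAdd := hleast.2 hi
    have hge : i.toAdd ≤ 1 + m.toAdd := (g.support.le_max' _ hi).trans hwidth
    rw [← Multiplicative.toAdd.injective.eq_iff, ← Multiplicative.toAdd.injective.eq_iff,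
      toAdd_mul, toAdd_ofAdd]
    omega
  refine ⟨m, m⁻¹ • g.coeff m, m⁻¹ • g.coeff (m * .ofAdd 1), ?_, ?_⟩
  · exact (smul_ne_zero_iff_ne _).2 (mem_support_iff.1 hleast.1)
  · ext i
    rw [coeff_single_mul]
    by_cases hi : i = m ∨ i = m * .ofAdd 1
    · obtain rfl | rfl := hi <;> simp
    · obtain ⟨hi₀, hi₁⟩ := not_or.1 hi
      simp [notMem_support_iff.1 (mt hsupp_g hi), eq_inv_mul_iff_mul_eq,
        Ne.symm hi₀, Ne.symm hi₁]

/-- The sum of the coefficients, which is the augmentation of a skew group algebra as a left module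
over the coefficient ring. -/
noncomputable def coeffSum {R Γ : Type*} [Semiring R] : SkewMonoidAlgebra R Γ →+ R :=
  liftNC (AddMonoidHom.id R) fun _ ↦ 1

@[simp]
theorem coeffSum_single {R Γ : Type*} [Semiring R] (a : Γ) (r : R) :
    coeffSum (single a r) = r := by
  simp [coeffSum]

theorem coeffSum_mul_single_one {R Γ : Type*} [Semiring R] [Monoid Γ] [MulSemiringAction Γ R]
    (f : SkewMonoidAlgebra R Γ) (a : Γ) : coeffSum (f * single a 1) = coeffSum f := by
  induction f using SkewMonoidAlgebra.induction_on with
  | zero => rw [zero_mul]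
  | single b r => simp [single_mul_single]
  | add f g hf hg => rw [add_mul, map_add, map_add, hf, hg]

theorem one_add_sq_add_pow_four_dvd {R Γ : Type*} [CommRing R] [IsDomain R] [Monoid Γ]
    [MulSemiringAction Γ R] {t : Γ} {y a b : R} {e : SkewMonoidAlgebra R Γ} (hy : y ^ 2 ≠ 1)
    (hty : t • y ^ 2 = y ^ 3)
    (h : e * (single t 1 - 1) + (single 1 a + single t b) * (single 1 (y ^ 4) - 1) = 0) :
    1 + y ^ 2 + y ^ 4 ∣ a := by
  have hty4 : t • y ^ 4 = y ^ 6 := by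
    rw [show y ^ 4 = (y ^ 2) ^ 2 by ring, smul_pow', hty]; ring
  have hsum : a * y ^ 4 + b * y ^ 6 - (a + b) = 0 := by
    simpa [mul_sub, add_mul, single_mul_single, coeffSum_mul_single_one, hty4] using
      congrArg coeffSum h
  have hcancel : a * (1 + y ^ 2) + b * (1 + y ^ 2 + y ^ 4) = 0 := by
    refine (mul_eq_zero.1 ?_).resolve_left (sub_ne_zero.2 hy)
    linear_combination hsum
  exact ⟨a + y ^ 2 * b, by linear_combination -y ^ 2 * hcancel⟩

theorem one_add_sq_add_pow_four_dvd_coeff_one {R : Type*} [CommRing R] [IsDomain R]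
    [MulSemiringAction (Multiplicative ℤ) R] {y : R} (hy : y ^ 2 ≠ 1)
    (hty : (Multiplicative.ofAdd 1 : Multiplicative ℤ) • y ^ 2 = y ^ 3)
    {e g k h : SkewMonoidAlgebra R (Multiplicative ℤ)}
    (heg : e * (single (.ofAdd 1) 1 - 1) + g * (single 1 (y ^ 4) - 1) = 0)
    (hkg : k * g ≠ 0) {c : Multiplicative ℤ}
    (hsupp : ((k * g).support : Set (Multiplicative ℤ)) ⊆ Set.Icc c (c * .ofAdd 1))
    (hh : IsLeast ((h * g).support : Set (Multiplicative ℤ)) 1) :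
    1 + y ^ 2 + y ^ 4 ∣ (h * g).coeff 1 := by
  obtain ⟨n, a, b, ha, rfl⟩ := exists_eq_single_mul_single_add_single hkg hsupp
  have hn : single n⁻¹ (1 : R) * single n 1 = 1 := by simp [single_mul_single]
  have hdvd : 1 + y ^ 2 + y ^ 4 ∣ a := by
    refine one_add_sq_add_pow_four_dvd (e := single n⁻¹ 1 * e) (b := b) hy hty ?_
    have := congrArg (single n⁻¹ 1 * ·) heg
    rwa [mul_zero, mul_add, mul_assoc (single n 1), ← mul_assoc _ (single n 1), hn, one_mul,
      ← mul_assoc] at this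
  rw [← mul_assoc] at hh ⊢
  have hleast := isLeast_support_single_add_single
    (show (1 : Multiplicative ℤ) < .ofAdd 1 from Int.one_pos) ha b
  simpa using hdvd.trans (by simpa using coeff_one_dvd_of_isLeast_support_mul hleast hh)

end SkewMonoidAlgebra

namespace BSGroup

theorem semiconjBy_bsX : SemiconjBy bsX (bsY ^ 2) (bsY ^ 3) := by
  have hrel := PresentedGroup.one_of_mem (rels := bsRels) (Set.mem_singleton _)
  simp only [map_mul, map_pow, map_inv] at hrel
  exact mul_inv_eq_iff_eq_mul.1 (mul_inv_eq_one.1 hrel)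

theorem semiconjBy_bsX_pow (n : ℕ) : SemiconjBy bsX (bsY ^ (2 * n)) (bsY ^ (3 * n)) := by
  simpa only [pow_mul] using semiconjBy_bsX.pow_right n

/-- The homomorphism out of `⟨x, y | x y² x⁻¹ = y³⟩` given by a pair satisfying the relation. -/
def lift {H : Type*} [Group H] {u v : H} (h : SemiconjBy u (v ^ 2) (v ^ 3)) : BSGroup →* H :=
  PresentedGroup.toGroup (f := ![u, v]) fun r hr ↦ by
    rw [Set.mem_singleton_iff.1 hr]
    simp [h.eq]

@[simp]
theorem lift_bsX {H : Type*} [Group H] {u v : H} (h : SemiconjBy u (v ^ 2) (v ^ 3)) :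
    lift h bsX = u :=
  PresentedGroup.toGroup.of _

@[simp]
theorem lift_bsY {H : Type*} [Group H] {u v : H} (h : SemiconjBy u (v ^ 2) (v ^ 3)) :
    lift h bsY = v :=
  PresentedGroup.toGroup.of _

/-- The free generator over `x`. -/
def freeX : FreeGroup (Fin 2) := FreeGroup.of 0

/-- The free generator over `z = y⁴`. -/
def freeZ : FreeGroup (Fin 2) := FreeGroup.of 1

/-- A word in `x` and `z = y⁴` representing `y = x² z x⁻² z⁻²`. -/
def wordY : FreeGroup (Fin 2) := freeX ^ 2 * freeZ / (freeZ ^ 2 * freeX ^ 2)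

@[simp]
theorem bsPi_freeX : bsPi freeX = bsX := by
  simp [bsPi, freeX]

@[simp]
theorem bsPi_freeZ : bsPi freeZ = bsY ^ 4 := by
  simp [bsPi, freeZ]

@[simp]
theorem bsPi_wordY : bsPi wordY = bsY := by
  have h : SemiconjBy (bsX ^ 2) (bsY ^ 4) (bsY ^ 9) := by
    rw [pow_two]
    exact (semiconjBy_bsX_pow 3).mul_left (semiconjBy_bsX_pow 2)
  rw [wordY, map_div, div_eq_iff_eq_mul]
  simp only [map_mul, map_pow, bsPi_freeX, bsPi_freeZ, ← pow_mul]
  rw [← mul_assoc, ← pow_succ']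
  exact h.eq

theorem bsPi_surjective : Function.Surjective bsPi := by
  rw [← MonoidHom.range_eq_top, eq_top_iff, ← PresentedGroup.closure_range_of, Subgroup.closure_le]
  rintro _ ⟨i, rfl⟩
  fin_cases i
  exacts [⟨freeX, bsPi_freeX⟩, ⟨wordY, bsPi_wordY⟩]

/-- The relation `x y² = y³ x`, with `y` replaced by its word. -/
def relR : bsPi.ker :=
  ⟨freeX * wordY ^ 2 / (wordY ^ 3 * freeX), by
    simp [MonoidHom.mem_ker, semiconjBy_bsX.eq]⟩

/-- The relation `z = y⁴`, with `y` replaced by its word. -/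
def relS : bsPi.ker :=
  ⟨freeZ / wordY ^ 4, by simp [MonoidHom.mem_ker]⟩

/-- The relation `x z² = z³ x`. -/
def relQ : bsPi.ker :=
  ⟨freeX * freeZ ^ 2 / (freeZ ^ 3 * freeX), by
    simp [MonoidHom.mem_ker, ← pow_mul, (semiconjBy_bsX_pow 4).eq]⟩

theorem normalClosure_relR_relS :
    Subgroup.normalClosure (Subtype.val '' {relR, relS}) = bsPi.ker := by
  set N := Subgroup.normalClosure (Subtype.val '' {relR, relS})
  have mem_N (r : bsPi.ker) (hr : r ∈ ({relR, relS} : Set bsPi.ker)) :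
      QuotientGroup.mk' N r = 1 :=
    (QuotientGroup.eq_one_iff _).2 (Subgroup.subset_normalClosure ⟨r, hr, rfl⟩)
  have hR : SemiconjBy (QuotientGroup.mk' N freeX) (QuotientGroup.mk' N wordY ^ 2)
      (QuotientGroup.mk' N wordY ^ 3) := by
    have := mem_N relR (by simp)
    simp only [relR, map_div, div_eq_one, map_mul, map_pow] at this
    exact this
  have hS : QuotientGroup.mk' N freeZ = QuotientGroup.mk' N wordY ^ 4 := by
    simpa only [relS, map_div, div_eq_one, map_pow] using mem_N relS (by simp)
  have lift_comp : (lift hR).comp bsPi = QuotientGroup.mk' N := by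
    ext i
    fin_cases i
    · change lift hR (bsPi freeX) = QuotientGroup.mk' N freeX
      rw [bsPi_freeX, lift_bsX]
    · change lift hR (bsPi freeZ) = QuotientGroup.mk' N freeZ
      rw [bsPi_freeZ, map_pow, lift_bsY, hS]
  refine le_antisymm (Subgroup.normalClosure_le_normal ?_) fun f hf ↦ ?_
  · rintro _ ⟨r, -, rfl⟩
    exact r.2
  · rw [← QuotientGroup.eq_one_iff]
    change QuotientGroup.mk' N f = 1
    rw [← lift_comp, MonoidHom.comp_apply, MonoidHom.mem_ker.1 hf, map_one]

theorem conj_relR_relS_identity :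
    MulAut.conjNormal (freeX ^ 2) relS * MulAut.conjNormal freeX relR *
      MulAut.conjNormal (freeX * wordY ^ 3) relR * relR * MulAut.conjNormal (wordY ^ 3) relR *
      MulAut.conjNormal (wordY ^ 6) relR =
    MulAut.conjNormal wordY relS * MulAut.conjNormal (wordY ^ 5) relS := by
  have key (a b w : FreeGroup (Fin 2)) (hw : w * b ^ 2 = a ^ 2 * b * (a ^ 2)⁻¹) :
      a ^ 2 * (b / w ^ 4) * (a ^ 2)⁻¹ * (a * (a * w ^ 2 / (w ^ 3 * a)) * a⁻¹) *
        (a * w ^ 3 * (a * w ^ 2 / (w ^ 3 * a)) * (a * w ^ 3)⁻¹) * (a * w ^ 2 / (w ^ 3 * a)) *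
        (w ^ 3 * (a * w ^ 2 / (w ^ 3 * a)) * (w ^ 3)⁻¹) *
        (w ^ 6 * (a * w ^ 2 / (w ^ 3 * a)) * (w ^ 6)⁻¹) =
      w * (b / w ^ 4) * w⁻¹ * (w ^ 5 * (b / w ^ 4) * (w ^ 5)⁻¹) := by
    simp only [div_eq_mul_inv]
    calc _ = a ^ 2 * b * (a ^ 2)⁻¹ * (w ^ 9)⁻¹ := by group
      _ = w * b ^ 2 * (w ^ 9)⁻¹ := by rw [hw]
      _ = _ := by rw [pow_two b]; group
  exact Subtype.ext (key freeX freeZ wordY (by simp only [wordY, div_eq_mul_inv]; group))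

theorem mul_add_mul_eq_one_of_semiconjBy {A : Type*} [Ring A] {x y : A}
    (h : SemiconjBy x (y ^ 2) (y ^ 3)) :
    (x * (1 + y ^ 3) + (1 + y ^ 3 + y ^ 6)) *
        (∑ i ∈ Finset.range 3, y ^ i - x * ∑ i ∈ Finset.range 2, y ^ i) +
      (x ^ 2 - y - y ^ 5) * ∑ i ∈ Finset.range 4, y ^ i = 1 := by
  have hxx : x * (1 + y ^ 3) * (x * (1 + y)) = x ^ 2 * (1 + y + y ^ 2 + y ^ 3) := by
    calc x * (1 + y ^ 3) * (x * (1 + y)) = x * ((x + y ^ 3 * x) * (1 + y)) := by noncomm_ring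
      _ = _ := by rw [← h.eq]; noncomm_ring
  have hyx : (1 + y ^ 3 + y ^ 6) * (x * (1 + y)) =
      x * (1 + y + y ^ 2 + y ^ 3 + y ^ 4 + y ^ 5) := by
    have h6 : x * y ^ 4 = y ^ 6 * x := by
      simpa only [← pow_mul] using (h.pow_right 2).eq
    calc (1 + y ^ 3 + y ^ 6) * (x * (1 + y)) = (x + y ^ 3 * x + y ^ 6 * x) * (1 + y) := by
          noncomm_ring
      _ = _ := by rw [← h.eq, ← h6]; noncomm_ring
  simp only [Finset.sum_range_succ, Finset.sum_range_zero, pow_zero, pow_one, zero_add]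
  rw [mul_sub, add_mul _ _ (x * (1 + y)), hxx, hyx]
  noncomm_ring

local notation "𝐱" => MonoidAlgebra.of ℤ BSGroup bsX
local notation "𝐲" => MonoidAlgebra.of ℤ BSGroup bsY

theorem semiconjBy_of_bsX : SemiconjBy 𝐱 (𝐲 ^ 2) (𝐲 ^ 3) := by
  simpa only [map_pow] using semiconjBy_bsX.map (MonoidAlgebra.of ℤ BSGroup)

section FoxCalculus

variable {N : Type*} [AddCommGroup N] [Module (MonoidAlgebra ℤ BSGroup) N]
  {D : FreeGroup (Fin 2) → N} (hD : IsCrossedHom ((MonoidAlgebra.of ℤ BSGroup).comp bsPi) D)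
include hD

theorem crossedHom_wordY :
    D wordY = ((1 - 𝐲 ^ 9) * (1 + 𝐱)) • D freeX + (𝐱 ^ 2 - 𝐲 - 𝐲 ^ 5) • D freeZ := by
  have hword : wordY * (freeZ ^ 2 * freeX ^ 2) = freeX ^ 2 * freeZ := div_mul_cancel _ _
  have hDword := congrArg D hword
  simp only [hD wordY, hD (freeZ ^ 2), hD (freeX ^ 2), hD.map_pow, MonoidHom.comp_apply, map_pow,
    bsPi_freeX, bsPi_freeZ, bsPi_wordY, Finset.sum_range_succ, Finset.sum_range_zero] at hDword
  rw [← eq_sub_iff_add_eq] at hDword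
  rw [hDword]
  simp only [smul_add, ← mul_smul]
  match_scalars <;> noncomm_ring

theorem crossedHom_relR :
    D relR = (1 - 𝐲 ^ 3) • D freeX -
      (∑ i ∈ Finset.range 3, 𝐲 ^ i - 𝐱 * ∑ i ∈ Finset.range 2, 𝐲 ^ i) • D wordY := by
  rw [relR, hD.map_div_of_eq, hD, hD, hD.map_pow, hD.map_pow]
  · simp only [MonoidHom.comp_apply, map_pow, bsPi_freeX, bsPi_wordY, sub_smul, one_smul, mul_smul]
    abel
  · simp [-MonoidAlgebra.of_apply, semiconjBy_of_bsX.eq]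

theorem crossedHom_relS :
    D relS = D freeZ - (∑ i ∈ Finset.range 4, 𝐲 ^ i) • D wordY := by
  rw [relS, hD.map_div_of_eq, hD.map_pow] <;>
    simp [-MonoidAlgebra.of_apply]

theorem crossedHom_relQ :
    D relQ = (1 - 𝐲 ^ 12) • D freeX +
      (𝐱 * (1 + 𝐲 ^ 4) - (1 + 𝐲 ^ 4 + 𝐲 ^ 8)) • D freeZ := by
  rw [relQ, hD.map_div_of_eq, hD, hD, hD.map_pow, hD.map_pow]
  · simp only [MonoidHom.comp_apply, map_pow, bsPi_freeX, bsPi_freeZ, Finset.sum_range_succ,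
      Finset.sum_range_zero, ← mul_smul]
    match_scalars <;> noncomm_ring
  · have h : bsPi (freeX * freeZ ^ 2) = bsPi (freeZ ^ 3 * freeX) := by
      simp [← pow_mul, (semiconjBy_bsX_pow 4).eq]
    exact congrArg (MonoidAlgebra.of ℤ BSGroup) h

end FoxCalculus

theorem not_isOfFinOrder_bsY : ¬ IsOfFinOrder bsY := by
  have h : SemiconjBy (Equiv.mulLeft₀ (3 / 2 : ℚ) (by norm_num)) (Equiv.addRight (1 : ℚ) ^ 2)
      (Equiv.addRight (1 : ℚ) ^ 3) := by
    ext q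
    simp
    ring
  rw [isOfFinOrder_iff_pow_eq_one]
  rintro ⟨n, hn, hpow⟩
  have hzero : (n : ℚ) = 0 := by
    simpa using DFunLike.congr_fun (congrArg (lift h) hpow) 0
  exact hn.ne' (Nat.cast_eq_zero.1 hzero)

section RelationModule

open RelationModule

variable [Module (MonoidAlgebra ℤ BSGroup) (RelationModule bsPi)]
  (hact : ActsByConjugation bsPi)
include hact

theorem smul_mk_relR_add_smul_mk_relS :
    (𝐱 * (1 + 𝐲 ^ 3) + (1 + 𝐲 ^ 3 + 𝐲 ^ 6)) • mk relR + (𝐱 ^ 2 - 𝐲 - 𝐲 ^ 5) • mk relS = 0 := by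
  have hconj (f : FreeGroup (Fin 2)) (r : bsPi.ker) :
      mk (MulAut.conjNormal f r) = MonoidAlgebra.of ℤ BSGroup (bsPi f) • mk r := (hact f r).symm
  have h := congrArg mk conj_relR_relS_identity
  simp only [mk_mul, hconj] at h
  simp only [map_mul, map_pow, bsPi_freeX, bsPi_wordY] at h
  rw [← sub_eq_zero.2 h]
  match_scalars <;> noncomm_ring

theorem eq_zero_of_smul_mk_relR_add_smul_mk_relS {u v : MonoidAlgebra ℤ BSGroup}
    (hrel : u • mk relR + v • mk relS = 0)
    (huv : u * (∑ i ∈ Finset.range 3, 𝐲 ^ i - 𝐱 * ∑ i ∈ Finset.range 2, 𝐲 ^ i) +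
      v * ∑ i ∈ Finset.range 4, 𝐲 ^ i = 0) : u = 0 ∧ v = 0 := by
  have hzero {D : FreeGroup (Fin 2) → MonoidAlgebra ℤ BSGroup}
      (hD : IsCrossedHom ((MonoidAlgebra.of ℤ BSGroup).comp bsPi) D) :
      u * (1 - 𝐲 ^ 3) * D freeX + v * D freeZ = 0 := by
    have h := congrArg (ofCrossedHom bsPi_surjective hact hD) hrel
    simp only [map_add, map_smul, map_zero, ofCrossedHom_mk, crossedHom_relR hD,
      crossedHom_relS hD, smul_eq_mul] at h
    linear_combination (norm := noncomm_ring) h + huv * D wordY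
  have hu := hzero (isCrossedHom_foxDerivation _ (Pi.single 0 1))
  have hv := hzero (isCrossedHom_foxDerivation _ (Pi.single 1 1))
  simp only [freeX, freeZ, foxDerivation_of] at hu hv
  have hregular := isRightRegular_one_sub_of (k := ℤ)
    (mt (IsOfFinOrder.of_pow · (by norm_num)) not_isOfFinOrder_bsY : ¬ IsOfFinOrder (bsY ^ 3))
  rw [map_pow] at hregular
  exact ⟨hregular.mul_right_eq_zero_iff.1 (by simpa using hu), by simpa using hv⟩

theorem nonempty_prod_linearEquiv :
    Nonempty ((RelationModule bsPi × MonoidAlgebra ℤ BSGroup) ≃ₗ[MonoidAlgebra ℤ BSGroup]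
      (MonoidAlgebra ℤ BSGroup × MonoidAlgebra ℤ BSGroup)) := by
  have hspan := span_image_mk_eq_top hact normalClosure_relR_relS
  rw [Set.image_pair] at hspan
  exact nonempty_prod_linearEquiv_of_span_pair hspan (smul_mk_relR_add_smul_mk_relS hact)
    (mul_add_mul_eq_one_of_semiconjBy semiconjBy_of_bsX)
    fun _ _ ↦ eq_zero_of_smul_mk_relR_add_smul_mk_relS hact

end RelationModule

section ToSkew

open SkewMonoidAlgebra

variable {R : Type*} [CommRing R] [MulSemiringAction (Multiplicative ℤ) R] {y : Rˣ}
  (hty : (Multiplicative.ofAdd 1 : Multiplicative ℤ) • (y : R) ^ 2 = (y : R) ^ 3)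

include hty in
theorem semiconjBy_single :
    SemiconjBy ((SkewMonoidAlgebra.of R (Multiplicative ℤ)).toHomUnits (.ofAdd 1))
      (Units.map (singleOneRingHom (G := Multiplicative ℤ)).toMonoidHom y ^ 2)
      (Units.map (singleOneRingHom (G := Multiplicative ℤ)).toMonoidHom y ^ 3) := by
  rw [← map_pow, ← map_pow]
  refine Units.ext ?_
  change single _ 1 * single 1 ((y ^ 2 : Rˣ) : R) = single 1 ((y ^ 3 : Rˣ) : R) * single _ 1
  simp [single_mul_single, hty]

/-- The ring homomorphism from `ℤ[BSGroup]` to the skew Laurent polynomials `R[t, t⁻¹]` that sends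
`x` to `t` and `y` to a unit of `R` with `t • y² = y³`. -/
noncomputable def toSkew :
    MonoidAlgebra ℤ BSGroup →+* SkewMonoidAlgebra R (Multiplicative ℤ) :=
  (MonoidAlgebra.lift ℤ (SkewMonoidAlgebra R (Multiplicative ℤ)) BSGroup
    ((Units.coeHom _).comp (lift (semiconjBy_single hty)))).toRingHom

theorem toSkew_of (g : BSGroup) :
    toSkew hty (MonoidAlgebra.of ℤ BSGroup g) = (lift (semiconjBy_single hty) g : _) :=
  MonoidAlgebra.lift_of _ _

theorem toSkew_bsX : toSkew hty 𝐱 = single (.ofAdd 1) 1 := by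
  rw [toSkew_of, lift_bsX]
  rfl

theorem toSkew_bsY : toSkew hty 𝐲 = singleOneRingHom (y : R) := by
  rw [toSkew_of, lift_bsY]
  rfl

theorem toSkew_foxDerivation_relQ :
    toSkew hty (foxDerivation ((MonoidAlgebra.of ℤ BSGroup).comp bsPi) (Pi.single 1 1) relQ) =
      single 1 (-(1 + (y : R) ^ 4 + (y : R) ^ 8)) + single (.ofAdd 1) (1 + (y : R) ^ 6) := by
  have hcomm : 𝐱 * 𝐲 ^ 4 = 𝐲 ^ 6 * 𝐱 := by
    simpa only [← pow_mul] using (semiconjBy_of_bsX.pow_right 2).eq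
  rw [crossedHom_relQ (isCrossedHom_foxDerivation _ _), mul_add, hcomm,
    single_eq_singleOneRingHom_mul 1, single_eq_singleOneRingHom_mul (Multiplicative.ofAdd (1 : ℤ)),
    ← one_def]
  simp only [freeX, freeZ, foxDerivation_of, Pi.single_eq_same, Pi.single_eq_of_ne zero_ne_one,
    mul_zero, zero_add, smul_eq_mul, mul_one, map_sub, map_add, map_neg, map_mul, map_pow, map_one,
    toSkew_bsX, toSkew_bsY]
  noncomm_ring

theorem toSkew_foxDerivation_relS :
    toSkew hty (foxDerivation ((MonoidAlgebra.of ℤ BSGroup).comp bsPi) (Pi.single 1 1) relS) =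
      single 1 (∑ i ∈ Finset.range 9, (y : R) ^ i) +
        single (.ofAdd 2) (-∑ i ∈ Finset.range 4, (y : R) ^ i) := by
  have hsq : (single (.ofAdd 2) 1 : SkewMonoidAlgebra R (Multiplicative ℤ)) =
      single (.ofAdd 1) 1 ^ 2 := by
    rw [pow_two, single_mul_single, smul_one, mul_one, ← ofAdd_add, one_add_one_eq_two]
  rw [crossedHom_relS (isCrossedHom_foxDerivation _ _),
    crossedHom_wordY (isCrossedHom_foxDerivation _ _),
    single_eq_singleOneRingHom_mul 1, single_eq_singleOneRingHom_mul (Multiplicative.ofAdd (2 : ℤ)),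
    ← one_def, hsq]
  simp only [freeX, freeZ, foxDerivation_of, Pi.single_eq_same, Pi.single_eq_of_ne zero_ne_one,
    mul_zero, zero_add, smul_eq_mul, mul_one, map_sub, map_add, map_neg, map_mul, map_pow, map_one,
    toSkew_bsX, toSkew_bsY, Finset.sum_range_succ, Finset.sum_range_zero]
  noncomm_ring

section RelationModule

open RelationModule

variable [Module (MonoidAlgebra ℤ BSGroup) (RelationModule bsPi)]
  (hact : ActsByConjugation bsPi) (m : RelationModule bsPi)

theorem toSkew_foxDerivative_mul_add :
    toSkew hty (foxDerivative bsPi_surjective hact 0 m) * (single (.ofAdd 1) 1 - 1) +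
      toSkew hty (foxDerivative bsPi_surjective hact 1 m) * (single 1 ((y : R) ^ 4) - 1) = 0 := by
  have hsum := sum_foxDerivative_mul_of_sub_one bsPi_surjective hact m
  rw [Fin.sum_univ_two, ← freeX, ← freeZ, bsPi_freeX, bsPi_freeZ, map_pow] at hsum
  have hsum := congrArg (toSkew hty) hsum
  simp only [map_add, map_mul, map_sub, map_one, map_zero, map_pow, toSkew_bsX, toSkew_bsY] at hsum
  rwa [← map_pow] at hsum

variable {m} in
theorem exists_mul_toSkew_foxDerivative_eq
    (hm : Submodule.span (MonoidAlgebra ℤ BSGroup) {m} = ⊤) (r : bsPi.ker) :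
    ∃ u, u * toSkew hty (foxDerivative bsPi_surjective hact 1 m) = toSkew hty (foxDerivation
      ((MonoidAlgebra.of ℤ BSGroup).comp bsPi) (Pi.single 1 1) r) := by
  obtain ⟨u, hu⟩ := Submodule.mem_span_singleton.1 (hm.ge (Submodule.mem_top (x := mk r)))
  exact ⟨toSkew hty u, by
    rw [← map_mul, ← smul_eq_mul, ← map_smul, hu, foxDerivative_mk]⟩

include hty hact in
theorem span_singleton_ne_top_of_isPrimitiveRoot [IsDomain R] {K : Type*} [Field K] [CharZero K]
    (φ : R →+* K) (hφ : IsPrimitiveRoot (φ y) 6) :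
    Submodule.span (MonoidAlgebra ℤ BSGroup) {m} ≠ ⊤ := by
  intro hm
  obtain ⟨k, hk⟩ := exists_mul_toSkew_foxDerivative_eq hty hact hm relQ
  obtain ⟨h, hh⟩ := exists_mul_toSkew_foxDerivative_eq hty hact hm relS
  rw [toSkew_foxDerivation_relQ] at hk
  rw [toSkew_foxDerivation_relS] at hh
  have hsq : (y : R) ^ 2 ≠ 1 := fun h ↦
    hφ.pow_ne_one_of_pos_of_lt two_ne_zero (by norm_num) (by rw [← map_pow, h, map_one])
  have hndvd := not_one_add_sq_add_pow_four_dvd_sum_range_nine φ hφ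
  have hsum : ∑ i ∈ Finset.range 9, (y : R) ^ i ≠ 0 := fun h ↦ hndvd (h ▸ dvd_zero _)
  have hsix : 1 + (y : R) ^ 6 ≠ 0 := fun h ↦ two_ne_zero (α := K) <| by
    simpa [hφ.pow_eq_one, one_add_one_eq_two] using congrArg φ h
  have hdvd := one_add_sq_add_pow_four_dvd_coeff_one hsq hty
    (toSkew_foxDerivative_mul_add hty hact m) (k := k) (h := h) (c := 1) ?_ ?_ ?_
  · rw [hh] at hdvd
    exact hndvd (by simpa using hdvd)
  · rw [hk]
    intro h
    exact hsix (by simpa using congrArg (coeff · (.ofAdd 1)) h)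
  · rw [hk, one_mul]
    exact support_single_add_single_subset_Icc (by decide) _ _
  · rw [hh]
    exact isLeast_support_single_add_single (by decide) hsum _

end RelationModule

end ToSkew

/-- The action of `ℤ = ⟨t⟩` on the ring `ℤ[ℚ]` of polynomials in rational powers of `y` for which
`t` sends `y ^ q` to `y ^ (3 q / 2)`. -/
noncomputable abbrev dilationAction :
    MulSemiringAction (Multiplicative ℤ) (AddMonoidAlgebra ℤ ℚ) :=
  MulSemiringAction.compHom _ <| zpowersHom (RingAut (AddMonoidAlgebra ℤ ℚ)) <|
    AddMonoidAlgebra.mapDomainRingEquiv ℤ <|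
      DistribMulAction.toAddEquiv ℚ (Units.mk0 (3 / 2 : ℚ) (by norm_num))

theorem dilationAction_ofAdd_one_smul_single (q : ℚ) :
    letI := dilationAction
    (Multiplicative.ofAdd 1 : Multiplicative ℤ) • AddMonoidAlgebra.single q (1 : ℤ) =
      AddMonoidAlgebra.single (3 / 2 * q) 1 := by
  let := dilationAction
  change zpowersHom (RingAut (AddMonoidAlgebra ℤ ℚ)) _ (Multiplicative.ofAdd 1) _ = _
  rw [zpowersHom_apply, toAdd_ofAdd, zpow_one]
  exact AddMonoidAlgebra.mapDomainRingEquiv_single ..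

/-- The evaluation `y ^ q ↦ exp (2 π i q / 6)` of polynomials in rational powers of `y`. -/
noncomputable def evalSixthRoot : AddMonoidAlgebra ℤ ℚ →+* ℂ :=
  (AddMonoidAlgebra.lift ℤ ℂ ℚ
    { toFun q := Complex.exp (2 * Real.pi * Complex.I / (6 : ℕ) * (q.toAdd : ℚ))
      map_one' := by simp
      map_mul' p q := by
        rw [toAdd_mul, Rat.cast_add, mul_add, Complex.exp_add] }).toRingHom

theorem isPrimitiveRoot_evalSixthRoot_single_one :
    IsPrimitiveRoot (evalSixthRoot (AddMonoidAlgebra.single 1 1)) 6 := by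
  simpa [evalSixthRoot] using Complex.isPrimitiveRoot_exp 6 (by norm_num)

theorem span_singleton_ne_top [Module (MonoidAlgebra ℤ BSGroup) (RelationModule bsPi)]
    (hact : RelationModule.ActsByConjugation bsPi) (m : RelationModule bsPi) :
    Submodule.span (MonoidAlgebra ℤ BSGroup) {m} ≠ ⊤ := by
  let := dilationAction
  let y : (AddMonoidAlgebra ℤ ℚ)ˣ := (AddMonoidAlgebra.of ℤ ℚ).toHomUnits (.ofAdd 1)
  have hy : (y : AddMonoidAlgebra ℤ ℚ) = .single 1 1 := rfl
  have hty : (Multiplicative.ofAdd 1 : Multiplicative ℤ) • (y : AddMonoidAlgebra ℤ ℚ) ^ 2 =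
      (y : AddMonoidAlgebra ℤ ℚ) ^ 3 := by
    rw [hy, AddMonoidAlgebra.single_pow, AddMonoidAlgebra.single_pow, one_pow, one_pow,
      dilationAction_ofAdd_one_smul_single]
    norm_num
  exact span_singleton_ne_top_of_isPrimitiveRoot hty hact m evalSixthRoot
    isPrimitiveRoot_evalSixthRoot_single_one

end BSGroup

/-- The relation module `M = M(G,{x,z})`, `z = y⁴` (the abelianization of
`R = ker (F(a,b) → G)` with `G` acting by conjugation) is stably free non-free
of rank one: `M ⊕ ℤG ≅ ℤG ⊕ ℤG` as `ℤG`-modules, but `M` is not isomorphic to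
`ℤG`; indeed `M` is not even a cyclic `ℤG`-module. -/
theorem relationModule_x_y4_stablyFree_nonFree
    [Module (MonoidAlgebra ℤ BSGroup) (Additive (Abelianization ↥bsPi.ker))]
    (hact : ∀ (f : FreeGroup (Fin 2)) (r r' : ↥bsPi.ker),
      (r' : FreeGroup (Fin 2)) = f * ↑r * f⁻¹ →
      MonoidAlgebra.of ℤ BSGroup (bsPi f) • Additive.ofMul (Abelianization.of r) =
        Additive.ofMul (Abelianization.of r')) :
    Nonempty ((Additive (Abelianization ↥bsPi.ker) × MonoidAlgebra ℤ BSGroup)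
        ≃ₗ[MonoidAlgebra ℤ BSGroup]
      (MonoidAlgebra ℤ BSGroup × MonoidAlgebra ℤ BSGroup)) ∧
    ¬ Nonempty (Additive (Abelianization ↥bsPi.ker)
        ≃ₗ[MonoidAlgebra ℤ BSGroup] MonoidAlgebra ℤ BSGroup) ∧
    ¬ ∃ m : Additive (Abelianization ↥bsPi.ker),
        Submodule.span (MonoidAlgebra ℤ BSGroup) {m} = ⊤ := by
  have hconj : RelationModule.ActsByConjugation bsPi := fun f r ↦
    hact f r _ (MulAut.conjNormal_apply f r)
  have hcyclic : ¬ ∃ m : RelationModule bsPi,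
      Submodule.span (MonoidAlgebra ℤ BSGroup) {m} = ⊤ := fun ⟨m, hm⟩ ↦
    BSGroup.span_singleton_ne_top hconj m hm
  refine ⟨BSGroup.nonempty_prod_linearEquiv hconj, fun ⟨e⟩ ↦ hcyclic ⟨e.symm 1, ?_⟩, hcyclic⟩
  refine eq_top_iff.2 fun m _ ↦ Submodule.mem_span_singleton.2 ⟨e m, ?_⟩
  rw [← map_smul, smul_eq_mul, mul_one, e.symm_apply_apply]
end

section
/- In the group G = ⟨x, y | x y² x⁻¹ = y³⟩, the subgroup generated by the two elements y⁴ and x y⁴ x⁻¹ equals the subgroup generated by y², and this subgroup is infinite cyclic. -/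
/-!
Conjugation by `x` sends `y⁴` to `y⁶`, and `y⁴, y⁶` generate `⟨y²⟩` because `gcd 4 6 = 2`.
That `y` has infinite order is visible in the action of `G` on the affine line `ℚ` in which `x`
scales by `3 / 2` and `y` translates by `1`.
-/

section Group

variable {G : Type*} [Group G]

theorem closure_pair_pow_eq_zpowers_pow_gcd (g : G) (m n : ℕ) :
    Subgroup.closure {g ^ m, g ^ n} = Subgroup.zpowers (g ^ m.gcd n) := by
  apply le_antisymm
  · rw [Subgroup.closure_le, Set.pair_subset_iff]
    have pow_mem {j : ℕ} (hj : m.gcd n ∣ j) : g ^ j ∈ Subgroup.zpowers (g ^ m.gcd n) := by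
      obtain ⟨c, rfl⟩ := hj
      exact pow_mul g _ c ▸ Subgroup.npow_mem_zpowers _ c
    exact ⟨pow_mem (m.gcd_dvd_left n), pow_mem (m.gcd_dvd_right n)⟩
  · have bezout : g ^ m.gcd n = (g ^ m) ^ m.gcdA n * (g ^ n) ^ m.gcdB n := by
      rw [← zpow_natCast, Nat.gcd_eq_gcd_ab, zpow_add, zpow_mul, zpow_mul, zpow_natCast,
        zpow_natCast]
    rw [Subgroup.zpowers_le, bezout]
    exact mul_mem (zpow_mem (Subgroup.subset_closure (.inl rfl)) _)
      (zpow_mem (Subgroup.subset_closure (.inr rfl)) _)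

theorem closure_pair_pow_conj_eq_zpowers {x y : G} {m n : ℕ} (h : x * y ^ m * x⁻¹ = y ^ n)
    (k : ℕ) :
    Subgroup.closure {y ^ (m * k), x * y ^ (m * k) * x⁻¹} =
      Subgroup.zpowers (y ^ (m.gcd n * k)) := by
  have conj_eq : x * y ^ (m * k) * x⁻¹ = y ^ (n * k) := by
    rw [pow_mul, ← conj_pow, h, ← pow_mul]
  rw [conj_eq, closure_pair_pow_eq_zpowers_pow_gcd, Nat.gcd_mul_right]

theorem nonempty_zpowers_mulEquiv_int {g : G} (hg : ¬IsOfFinOrder g) :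
    Nonempty (Subgroup.zpowers g ≃* Multiplicative ℤ) := by
  have : Infinite (Subgroup.zpowers g) := (infinite_zpowers.mpr hg).to_subtype
  exact ⟨intCyclicMulEquiv.symm⟩

end Group

section Affine

theorem homothety_conj_constVAdd {R V P : Type*} [CommRing R] [AddCommGroup V] [Module R V]
    [AddTorsor V P] (p : P) (t : Rˣ) (v : V) :
    AffineEquiv.homothetyUnitsMulHom p t * AffineEquiv.constVAdd R P v *
        (AffineEquiv.homothetyUnitsMulHom p t)⁻¹ =
      AffineEquiv.constVAdd R P ((t : R) • v) := by
  rw [mul_inv_eq_iff_eq_mul]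
  ext q
  simpa [AffineMap.homothety_apply] using vadd_comm (t.val • v) (t.val • (q -ᵥ p)) p

variable {R V P : Type*} [Ring R] [AddCommGroup V] [Module R V] [AddTorsor V P]

theorem constVAddHom_injective : Function.Injective (AffineEquiv.constVAddHom R P (V₁ := V)) := by
  intro v w h
  obtain ⟨p⟩ := AddTorsor.nonempty (G := V) (P := P)
  exact Multiplicative.toAdd.injective (vadd_right_cancel p (DFunLike.congr_fun h p))

theorem not_isOfFinOrder_constVAdd [IsAddTorsionFree V] {v : V} (hv : v ≠ 0) :
    ¬IsOfFinOrder (AffineEquiv.constVAdd R P v) :=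
  (constVAddHom_injective (R := R) (P := P)).isOfFinOrder_iff.not.mpr <|
    not_isOfFinOrder_of_isMulTorsionFree (ofAdd_eq_one.not.mpr hv)

end Affine

theorem bsX_mul_bsY_sq_mul_bsX_inv : bsX * bsY ^ 2 * bsX⁻¹ = bsY ^ 3 :=
  PresentedGroup.mk_eq_mk_of_mul_inv_mem (rels := bsRels) rfl

theorem exists_monoidHom_of_conj_sq_eq_cube {H : Type*} [Group H] {a b : H}
    (h : a * b ^ 2 * a⁻¹ = b ^ 3) : ∃ f : BSGroup →* H, f bsX = a ∧ f bsY = b := by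
  have lift_rel : ∀ r ∈ bsRels, FreeGroup.lift ![a, b] r = 1 := by
    rintro _ rfl
    simpa [mul_inv_eq_one] using h
  exact ⟨PresentedGroup.toGroup lift_rel, PresentedGroup.toGroup.of lift_rel,
    PresentedGroup.toGroup.of lift_rel⟩

theorem not_isOfFinOrder_bsY : ¬IsOfFinOrder bsY := by
  let scale : ℚ ≃ᵃ[ℚ] ℚ :=
    AffineEquiv.homothetyUnitsMulHom 0 (Units.mk0 (3 / 2) (by norm_num))
  let translate : ℚ ≃ᵃ[ℚ] ℚ := AffineEquiv.constVAdd ℚ ℚ 1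
  have rel : scale * translate ^ 2 * scale⁻¹ = translate ^ 3 := by
    simp only [scale, translate, ← AffineEquiv.constVAdd_nsmul, homothety_conj_constVAdd]
    norm_num
  obtain ⟨f, -, f_bsY⟩ := exists_monoidHom_of_conj_sq_eq_cube rel
  intro h
  exact not_isOfFinOrder_constVAdd one_ne_zero (f_bsY ▸ f.isOfFinOrder h)

/-- In `G = ⟨x, y | x y² x⁻¹ = y³⟩`, the subgroup generated by `y⁴` and
`x y⁴ x⁻¹` equals the subgroup generated by `y²`, and this subgroup is
infinite cyclic. -/
theorem closure_y4_xy4xinv_eq_closure_y2_and_infinite_cyclic :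
    Subgroup.closure ({bsY ^ 4, bsX * bsY ^ 4 * bsX⁻¹} : Set BSGroup) =
      Subgroup.closure {bsY ^ 2} ∧
    Nonempty (↥(Subgroup.closure ({bsY ^ 2} : Set BSGroup)) ≃* Multiplicative ℤ) := by
  have closure_eq :
      Subgroup.closure {bsY ^ 4, bsX * bsY ^ 4 * bsX⁻¹} = Subgroup.zpowers (bsY ^ 2) :=
    closure_pair_pow_conj_eq_zpowers bsX_mul_bsY_sq_mul_bsX_inv 2
  have not_isOfFinOrder_bsY_sq : ¬IsOfFinOrder (bsY ^ 2) :=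
    fun h => not_isOfFinOrder_bsY (h.of_pow two_ne_zero)
  rw [← Subgroup.zpowers_eq_closure]
  exact ⟨closure_eq, nonempty_zpowers_mulEquiv_int not_isOfFinOrder_bsY_sq⟩
end
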